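/- Let $d \geq 1$, $M > 0$, and $\delta \in (0, 1/10)$. Then for each coordinate index $\nu \in \{1, \dots, d\}$ there exists a constant $M_\nu(\delta) \geq 0$ such that for every $\lambda > 0$ and every $\mathbf{p} \in \mathbb{R}^d$, $$|p^\nu| \, (|\mathbf{p}|^2 + M^2 + \lambda)^{-1} (\sqrt{|\mathbf{p}|^2 + M^2} + 1)^{-1/2} \; \leq \; \frac{M_\nu(\delta)}{\lambda^{\frac{1}{2} + \delta}}.$$ -/

import Mathlib

open Real MeasureTheory

/-- If `0 ≤ δ ≤ 1/4`, then `E λ^(1/2 + δ) ≤ (E² + λ) (E + 1)^(1/2)` for positive `E` and `λ`. -/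
theorem mul_rpow_le_sq_add_mul_rpow {E lam δ : ℝ} (hE : 0 < E) (hlam : 0 < lam)
    (hδ0 : 0 ≤ δ) (hδ : δ ≤ 1 / 4) :
    E * lam ^ ((1 / 2 : ℝ) + δ) ≤ (E ^ 2 + lam) * (E + 1) ^ (1 / 2 : ℝ) := by
  have hS : 0 < E ^ 2 + lam := by positivity
  have hlam_le : lam ^ ((1 / 2 : ℝ) + δ) ≤ (E ^ 2 + lam) ^ ((1 / 2 : ℝ) + δ) :=
    rpow_le_rpow hlam.le (by nlinarith) (by linarith)
  have hE_split : E = E ^ (1 - 2 * δ) * E ^ (2 * δ) := by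
    rw [← rpow_add hE, sub_add_cancel, rpow_one]
  have hE_low : E ^ (1 - 2 * δ) ≤ (E ^ 2 + lam) ^ ((1 / 2 : ℝ) - δ) := by
    calc E ^ (1 - 2 * δ) = (E ^ 2) ^ ((1 / 2 : ℝ) - δ) := by
          rw [← rpow_natCast, ← rpow_mul hE.le]
          congr 1
          push_cast
          ring
      _ ≤ _ := rpow_le_rpow (by positivity) (by linarith) (by linarith)
  have hE_high : E ^ (2 * δ) ≤ (E + 1) ^ (1 / 2 : ℝ) :=
    (rpow_le_rpow hE.le (by linarith) (by linarith)).trans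
      (rpow_le_rpow_of_exponent_le (by linarith) (by linarith))
  calc E * lam ^ ((1 / 2 : ℝ) + δ)
      = E ^ (1 - 2 * δ) * E ^ (2 * δ) * lam ^ ((1 / 2 : ℝ) + δ) := by rw [← hE_split]
    _ ≤ (E ^ 2 + lam) ^ ((1 / 2 : ℝ) - δ) * (E + 1) ^ (1 / 2 : ℝ) *
          (E ^ 2 + lam) ^ ((1 / 2 : ℝ) + δ) := by gcongr
    _ = (E ^ 2 + lam) ^ (((1 / 2 : ℝ) - δ) + ((1 / 2 : ℝ) + δ)) * (E + 1) ^ (1 / 2 : ℝ) := by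
          rw [rpow_add hS ((1 / 2 : ℝ) - δ)]
          ring
    _ = (E ^ 2 + lam) * (E + 1) ^ (1 / 2 : ℝ) := by
          rw [show ((1 / 2 : ℝ) - δ) + ((1 / 2 : ℝ) + δ) = 1 by ring, rpow_one]

/-- Lemma 3.2 of the paper (Fourier-multiplier form): for `δ ∈ (0, 1/10)` there is a
constant `C = M_ν(δ) ≥ 0` such that for all `λ > 0` and `p ∈ ℝᵈ`,
`|pᵛ| (|p|² + M² + λ)⁻¹ (√(|p|² + M²) + 1)^(-1/2) ≤ C / λ^(1/2 + δ)`. -/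
theorem stmt_0 (d : ℕ) (hd : 1 ≤ d) (M δ : ℝ) (hM : 0 < M)
    (hδ : δ ∈ Set.Ioo (0 : ℝ) (1 / 10)) (ν : Fin d) :
    ∃ C : ℝ, 0 ≤ C ∧ ∀ lam : ℝ, 0 < lam → ∀ p : EuclideanSpace ℝ (Fin d),
      |p ν| * (‖p‖ ^ 2 + M ^ 2 + lam)⁻¹ *
          (Real.sqrt (‖p‖ ^ 2 + M ^ 2) + 1) ^ (-(1 / 2 : ℝ))
        ≤ C / lam ^ ((1 / 2 : ℝ) + δ) := by
  refine ⟨1, zero_le_one, fun lam hlam p => ?_⟩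
  have hA : 0 < ‖p‖ ^ 2 + M ^ 2 := by positivity
  set E := Real.sqrt (‖p‖ ^ 2 + M ^ 2) with hE_def
  have hE : 0 < E := Real.sqrt_pos.2 hA
  have hE_sq : ‖p‖ ^ 2 + M ^ 2 = E ^ 2 := (Real.sq_sqrt hA.le).symm
  have hp : |p ν| ≤ E :=
    (PiLp.norm_apply_le p ν).trans (Real.le_sqrt_of_sq_le (by nlinarith))
  rw [hE_sq, rpow_neg (by positivity), mul_assoc, ← mul_inv, ← div_eq_mul_inv,
    div_le_div_iff₀ (by positivity) (by positivity), one_mul]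
  calc |p ν| * lam ^ ((1 / 2 : ℝ) + δ) ≤ E * lam ^ ((1 / 2 : ℝ) + δ) := by gcongr
    _ ≤ _ := mul_rpow_le_sq_add_mul_rpow hE hlam hδ.1.le (by linarith [hδ.2])
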